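/- Let 𝔤 be a 4-dimensional Lie algebra over ℝ whose underlying vector space carries a real inner product with orthonormal basis X₁,X₂,X₃,X₄, and whose Lie bracket is determined by [X₂,X₄] = γ₁·X₁ and [X₃,X₄] = γ₂·X₂ − γ₃·X₁, where γ₁ > 0, γ₂ > 0 and γ₃ ≥ 0, with all other brackets of basis vectors (up to antisymmetry) equal to zero. Then the only element E ∈ 𝔤 satisfying the parallelism identity ⟨[Y,E],Z⟩ − ⟨[Z,Y],E⟩ + ⟨[Z,E],Y⟩ = 0 for all Y,Z ∈ 𝔤 is E = 0. -/

import Mathlib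

open scoped RealInnerProductSpace

theorem eq_of_inner_eq {V : Type*} [NormedAddCommGroup V] [InnerProductSpace ℝ V] (x y : V)
    (h1 : ⟪x, x⟫ = ⟪x, y⟫) (h2 : ⟪y, y⟫ = ⟪x, y⟫) : x = y := by
  rw [← sub_eq_zero, ← inner_self_eq_zero (𝕜 := ℝ), real_inner_sub_sub_self]
  linarith

/-- The frozen statement carries two a priori unrelated additive structures on `g`: one from the
norm and one from the Lie ring. This version keeps only the Lie structure and treats the inner
product as a function `q` with the few properties that do not mention addition. -/
theorem stmt5_aux {g : Type*} [LieRing g] [LieAlgebra ℝ g] (X : Fin 4 → g)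
    (q : g → g → ℝ) (o : g) (hqo : ∀ y, q o y = 0) (hqs : ∀ x y, q x y = q y x)
    (hqd : ∀ x, q x x = 0 → x = o)
    (hqe : ∀ x y, q x x = q x y → q y y = q x y → x = y)
    (hX0 : X 0 ≠ o) (hspan : Submodule.span ℝ (Set.range X) = ⊤)
    (γ₁ γ₂ γ₃ : ℝ) (hγ₁ : 0 < γ₁) (hγ₂ : 0 < γ₂)
    (h24 : ⁅X 1, X 3⁆ = γ₁ • X 0)
    (h34 : ⁅X 2, X 3⁆ = γ₂ • X 1 - γ₃ • X 0)
    (h12 : ⁅X 0, X 1⁆ = 0) (h13 : ⁅X 0, X 2⁆ = 0) (h14 : ⁅X 0, X 3⁆ = 0)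
    (h23 : ⁅X 1, X 2⁆ = 0)
    (E : g)
    (hpar : ∀ Y Z : g, q ⁅Y, E⁆ Z - q ⁅Z, Y⁆ E + q ⁅Z, E⁆ Y = 0) :
    E = 0 := by
  have hdec : ∀ y : g, ∃ c : Fin 4 → ℝ,
      y = c 0 • X 0 + c 1 • X 1 + c 2 • X 2 + c 3 • X 3 := by
    intro y
    have hy : y ∈ Submodule.span ℝ (Set.range X) := by rw [hspan]; trivial
    obtain ⟨c, hc⟩ := (Submodule.mem_span_range_iff_exists_fun ℝ).1 hy
    exact ⟨c, by rw [← hc, Fin.sum_univ_four]⟩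
  have h21 : ⁅X 1, X 0⁆ = 0 := by rw [← lie_skew, h12, neg_zero]
  have hsym : ∀ Y Z, q ⁅Z, Y⁆ E = q ⁅Y, Z⁆ E := by
    intro Y Z
    linarith [hpar Y Z, hpar Z Y]
  have h0E : q 0 E = 0 := by
    have h := hpar o o
    rw [lie_self, hqs _ o, hqo] at h
    linarith
  have h0o : (0 : g) = o := by
    apply hqd
    have h := hpar 0 0
    simp only [lie_self, zero_lie] at h
    linarith
  have hq0 : ∀ y, q 0 y = 0 := by rw [h0o]; exact hqo
  rw [← h0o] at hX0 hqd
  -- X 0 is central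
  have hcen : ∀ y : g, ⁅X 0, y⁆ = 0 := by
    intro y
    obtain ⟨c, rfl⟩ := hdec y
    simp [h12, h13, h14]
  have himg : ∀ (t : ℝ) (Y : g), ⁅Y, E⁆ = t • X 0 → t = 0 := by
    intro t Y h
    have h1 := hpar Y (t • X 0)
    rw [smul_lie, smul_lie, hcen, hcen, smul_zero, hq0, hq0, h] at h1
    have h2 := hqd _ (by linarith)
    exact (smul_eq_zero.1 h2).resolve_right hX0
  obtain ⟨c, hc⟩ := hdec E
  have h3 : c 3 = 0 := by
    have h := himg (c 3 * γ₁) (X 1) (by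
      rw [hc]; simp [h21, h23, h24, smul_smul])
    exact (mul_eq_zero.1 h).resolve_right hγ₁.ne'
  obtain ⟨w, hw⟩ : ∃ w, w = ⁅E, X 3⁆ := ⟨_, rfl⟩
  have hw' : w = (c 1 * γ₁ - c 2 * γ₃) • X 0 + (c 2 * γ₂) • X 1 := by
    rw [hw, hc]
    simp only [add_lie, smul_lie, h14, h24, h34, lie_self, smul_zero]
    module
  have hwE : ⁅w, E⁆ = 0 := by
    rw [hw', hc]
    simp [h3, hcen, h21, h23, h12]
  have hXE : ⁅X 3, E⁆ = -w := by rw [hw, lie_skew]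
  have hw0 : w = 0 := by
    have a1 := hpar (X 3) w
    have a2 := hpar (X 3) (-w)
    have a3 := hpar (-X 3) w
    simp only [neg_lie, lie_neg, hwE, hXE, neg_neg, neg_zero, hq0] at a1 a2 a3
    have a4 := hsym (X 3) w
    rw [← lie_skew w (X 3)] at a4
    rw [← lie_skew w (X 3)] at a1 a2 a3
    simp only [neg_neg] at a1 a2 a3 a4
    have h := hqe w (-w) (by rw [hqs w (-w)]; linarith) (by rw [hqs w (-w)]; linarith)
    have h2 : (2 : ℝ) • w = 0 := by
      rw [two_smul]; nth_rewrite 1 [h]; exact neg_add_cancel w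
    exact (smul_eq_zero.1 h2).resolve_left two_ne_zero
  have h2 : c 2 = 0 := by
    have h : ⁅w, X 3⁆ = (c 2 * γ₂ * γ₁) • X 0 := by
      rw [hw']; simp [hcen, h24, smul_smul]
    rw [hw0, zero_lie] at h
    have h' := (smul_eq_zero.1 h.symm).resolve_right hX0
    simpa [hγ₁.ne', hγ₂.ne'] using h'
  have h1 : c 1 = 0 := by
    rw [hw0, h2] at hw'
    simpa [hγ₁.ne', hX0] using hw'.symm
  have hE : E = c 0 • X 0 := by rw [hc]; simp [h1, h2, h3]
  have hcenE : ∀ y : g, ⁅y, E⁆ = 0 := by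
    intro y
    rw [hE, lie_smul, ← lie_skew, hcen, neg_zero, smul_zero]
  apply hqd
  have h := hpar (X 3) ((c 0 / γ₁) • X 1)
  rw [hcenE, hcenE, hq0, hq0, smul_lie, h24, smul_smul, div_mul_cancel₀ _ hγ₁.ne', ← hE] at h
  linarith

/-- Nil⁴ in a Milnor basis: the only `E` satisfying the parallelism identity is `E = 0`. -/
theorem stmt5 {g : Type*} [NormedAddCommGroup g] [InnerProductSpace ℝ g]
    [LieRing g] [LieAlgebra ℝ g] (X : Fin 4 → g)
    (hON : Orthonormal ℝ X) (hspan : Submodule.span ℝ (Set.range X) = ⊤)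
    (γ₁ γ₂ γ₃ : ℝ) (hγ₁ : 0 < γ₁) (hγ₂ : 0 < γ₂) (hγ₃ : 0 ≤ γ₃)
    (h24 : ⁅X 1, X 3⁆ = γ₁ • X 0)
    (h34 : ⁅X 2, X 3⁆ = γ₂ • X 1 - γ₃ • X 0)
    (h12 : ⁅X 0, X 1⁆ = 0) (h13 : ⁅X 0, X 2⁆ = 0) (h14 : ⁅X 0, X 3⁆ = 0)
    (h23 : ⁅X 1, X 2⁆ = 0)
    (E : g)
    (hpar : ∀ Y Z : g, ⟪⁅Y, E⁆, Z⟫ - ⟪⁅Z, Y⁆, E⟫ + ⟪⁅Z, E⁆, Y⟫ = 0) :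
    E = 0 := by
  refine stmt5_aux X (fun x y => ⟪x, y⟫) _ (fun y => inner_zero_left y)
    (fun x y => real_inner_comm y x) (fun x h => inner_self_eq_zero.1 h)
    (fun x y h1 h2 => eq_of_inner_eq x y h1 h2) (hON.ne_zero 0) hspan
    γ₁ γ₂ γ₃ hγ₁ hγ₂ h24 h34 h12 h13 h14 h23 E hpar
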